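/- Extension theorem for a finite protoset: Let P be a finite nonempty family of compact subsets of ℝ², each of which is the closure of its (nonempty) interior. A patch is a family of sets, each obtained from some member of P by applying an isometry of ℝ², whose members have pairwise disjoint interiors. Suppose that for every R > 0 there exists a patch whose union contains the closed ball of radius R centered at the origin. Then there exists a patch whose union is all of ℝ², i.e., the protoset P admits a tiling of the plane. -/

import Mathlib

/-- A patch over a protoset `P`: a family of placed tiles, each the image of a prototile
under an isometry of the plane, with pairwise disjoint interiors. -/
def IsPatch (P : Set (Set (EuclideanSpace ℝ (Fin 2))))
    (Q : Set (Set (EuclideanSpace ℝ (Fin 2)))) : Prop :=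
  (∀ q ∈ Q, ∃ p ∈ P, ∃ f : EuclideanSpace ℝ (Fin 2) ≃ᵢ EuclideanSpace ℝ (Fin 2),
      q = f '' p) ∧
  Q.Pairwise fun a b => Disjoint (interior a) (interior b)

/-!
Take, for every radius `R`, a patch covering the ball of radius `R`, and pass to the limit along
an ultrafilter of radii tending to infinity. By Tychonoff, isometries sending some point into a
bounded set converge pointwise along the ultrafilter. Every point `x` lies in a tile of almost
all of the patches; as the protoset is finite these tiles may be taken to be copies of one
prototile, and the limiting copy contains `x`. If two limiting tiles have a common interior point,
then so do almost all of the tiles converging to them, which therefore coincide, and hence so do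
their limits.
-/

open Filter Metric Set Topology

variable {ι X Y : Type*}

section LimitsOfIsometries

variable [PseudoMetricSpace X] [PseudoMetricSpace Y] {l : Filter ι}

theorem isometry_of_tendsto [l.NeBot] {F : ι → X → Y} {f : X → Y} (hF : ∀ i, Isometry (F i))
    (hlim : Tendsto F l (𝓝 f)) : Isometry f := by
  rw [tendsto_pi_nhds] at hlim
  refine Isometry.of_dist_eq fun x y ↦ tendsto_nhds_unique ((hlim x).dist (hlim y)) ?_
  simp only [(hF _).dist_eq, tendsto_const_nhds]

theorem tendsto_isometry_apply {F : ι → X → Y} {f : X → Y} {u : ι → X} {x : X}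
    (hF : ∀ i, Isometry (F i)) (hlim : Tendsto F l (𝓝 f)) (hu : Tendsto u l (𝓝 x)) :
    Tendsto (fun i ↦ F i (u i)) l (𝓝 (f x)) := by
  refine (tendsto_iff_of_dist ?_).2 (tendsto_pi_nhds.1 hlim x)
  simpa only [(hF _).dist_eq] using tendsto_iff_dist_tendsto_zero.1 hu

theorem tendsto_isometryEquiv_symm {F : ι → X ≃ᵢ Y} {f : X ≃ᵢ Y}
    (hlim : Tendsto (fun i ↦ ⇑(F i)) l (𝓝 f)) :
    Tendsto (fun i ↦ ⇑(F i).symm) l (𝓝 f.symm) := by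
  refine tendsto_pi_nhds.2 fun y ↦ tendsto_iff_dist_tendsto_zero.2 ?_
  have dist_symm (i : ι) : dist ((F i).symm y) (f.symm y) = dist (F i (f.symm y)) y := by
    rw [← (F i).dist_eq, (F i).apply_symm_apply, dist_comm]
  simpa only [dist_symm, f.apply_symm_apply] using
    tendsto_iff_dist_tendsto_zero.1 (tendsto_pi_nhds.1 hlim (f.symm y))

theorem isometryEquiv_mem_interior_image (f : X ≃ᵢ Y) (p : Set X) (y : Y) :
    y ∈ interior (f '' p) ↔ f.symm y ∈ interior p := by
  rw [← f.coe_toHomeomorph, ← f.toHomeomorph.image_interior, ← f.toHomeomorph.preimage_symm]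
  rfl

theorem eventually_mem_interior_image {F : ι → X ≃ᵢ Y} {f : X ≃ᵢ Y} {p : Set X} {y : Y}
    (hlim : Tendsto (fun i ↦ ⇑(F i)) l (𝓝 f)) (hy : y ∈ interior (f '' p)) :
    ∀ᶠ i in l, y ∈ interior (F i '' p) := by
  simp only [isometryEquiv_mem_interior_image] at hy ⊢
  exact (tendsto_pi_nhds.1 (tendsto_isometryEquiv_symm hlim) y).eventually_mem
    (isOpen_interior.mem_nhds hy)

end LimitsOfIsometries

section UltrafilterLimits

variable {U : Ultrafilter ι}

theorem exists_tendsto_of_eventually_mem_isCompact [TopologicalSpace X] {K : Set X}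
    (hK : IsCompact K) {u : ι → X} (hu : ∀ᶠ i in U, u i ∈ K) :
    ∃ x ∈ K, Tendsto u U (𝓝 x) :=
  hK.ultrafilter_le_nhds' (U.map u) hu

theorem exists_tendsto_isometry [PseudoMetricSpace X] [PseudoMetricSpace Y] [ProperSpace Y]
    {F : ι → X → Y} (hF : ∀ i, Isometry (F i)) {x : X} {y : Y} {r : ℝ}
    (hbdd : ∀ᶠ i in U, dist (F i x) y ≤ r) : ∃ f : X → Y, Tendsto F U (𝓝 f) := by
  have hcompact : IsCompact (univ.pi fun z : X ↦ closedBall y (dist z x + r)) :=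
    isCompact_univ_pi fun z ↦ isCompact_closedBall y (dist z x + r)
  have hmem : ∀ᶠ i in U, F i ∈ univ.pi fun z : X ↦ closedBall y (dist z x + r) := by
    filter_upwards [hbdd] with i hi z _
    calc dist (F i z) y ≤ dist (F i z) (F i x) + dist (F i x) y := dist_triangle _ _ _
      _ ≤ dist z x + r := by rw [(hF i).dist_eq]; gcongr
  obtain ⟨f, -, hf⟩ := exists_tendsto_of_eventually_mem_isCompact hcompact hmem
  exact ⟨f, hf⟩

theorem exists_tendsto_isometryEquiv [MetricSpace X] [ProperSpace X] [MetricSpace Y]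
    [ProperSpace Y] {F : ι → X ≃ᵢ Y} {x : X} {y : Y} {r : ℝ}
    (hbdd : ∀ᶠ i in U, dist (F i x) y ≤ r) :
    ∃ f : X ≃ᵢ Y, Tendsto (fun i ↦ ⇑(F i)) U (𝓝 f) := by
  have hbdd_symm : ∀ᶠ i in U, dist ((F i).symm y) x ≤ r := by
    filter_upwards [hbdd] with i hi
    rwa [← (F i).dist_eq, (F i).apply_symm_apply, dist_comm]
  obtain ⟨f, hf⟩ := exists_tendsto_isometry (fun i ↦ (F i).isometry) hbdd
  obtain ⟨g, hg⟩ := exists_tendsto_isometry (fun i ↦ (F i).symm.isometry) hbdd_symm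
  have hfg (z : Y) : f (g z) = z := by
    have hlim := tendsto_isometry_apply (fun i ↦ (F i).isometry) hf (tendsto_pi_nhds.1 hg z)
    simp only [IsometryEquiv.apply_symm_apply] at hlim
    exact tendsto_nhds_unique hlim tendsto_const_nhds
  exact ⟨.mk' f g hfg (isometry_of_tendsto (fun i ↦ (F i).isometry) hf), hf⟩

variable [PseudoMetricSpace X] [MetricSpace Y]

-- The right-hand side only depends on the sets `F i '' p`, so these determine the limit `f '' p`.
theorem mem_image_iff_exists_tendsto {F : ι → X → Y} {f : X → Y} {p : Set X}
    (hF : ∀ i, Isometry (F i)) (hlim : Tendsto F U (𝓝 f)) (hp : IsCompact p) {y : Y} :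
    y ∈ f '' p ↔ ∃ v : ι → Y, (∀ᶠ i in U, v i ∈ F i '' p) ∧ Tendsto v U (𝓝 y) := by
  constructor
  · rintro ⟨x, hx, rfl⟩
    exact ⟨fun i ↦ F i x, .of_forall fun i ↦ mem_image_of_mem _ hx, tendsto_pi_nhds.1 hlim x⟩
  · rintro ⟨v, hv, hvy⟩
    obtain ⟨u, hu⟩ := Eventually.choice hv
    obtain ⟨x, hx, hux⟩ :=
      exists_tendsto_of_eventually_mem_isCompact hp (hu.mono fun _ h ↦ h.1)
    have hFu : Tendsto (fun i ↦ F i (u i)) U (𝓝 y) := hvy.congr' (hu.mono fun _ h ↦ h.2.symm)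
    exact ⟨x, hx, tendsto_nhds_unique (tendsto_isometry_apply hF hlim hux) hFu⟩

theorem image_eq_image_of_eventually_eq {X' : Type*} [PseudoMetricSpace X'] {F : ι → X → Y}
    {G : ι → X' → Y} {f : X → Y} {g : X' → Y} {p : Set X} {q : Set X'}
    (hF : ∀ i, Isometry (F i)) (hG : ∀ i, Isometry (G i))
    (hFlim : Tendsto F U (𝓝 f)) (hGlim : Tendsto G U (𝓝 g)) (hp : IsCompact p) (hq : IsCompact q)
    (heq : ∀ᶠ i in U, F i '' p = G i '' q) : f '' p = g '' q := by
  ext y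
  rw [mem_image_iff_exists_tendsto hF hFlim hp, mem_image_iff_exists_tendsto hG hGlim hq]
  refine exists_congr fun v ↦ and_congr_left fun _ ↦ eventually_congr ?_
  filter_upwards [heq] with i hi
  rw [hi]

end UltrafilterLimits

/-- A patch over a protoset `P` in an arbitrary metric space: the analogue of `IsPatch`, to which it
unfolds when `X` is the Euclidean plane. -/
def IsIsometricPatch [PseudoMetricSpace X] (P Q : Set (Set X)) : Prop :=
  (∀ q ∈ Q, ∃ p ∈ P, ∃ f : X ≃ᵢ X, q = f '' p) ∧
  Q.Pairwise fun a b ↦ Disjoint (interior a) (interior b)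

/-- The limit along `l` of a family `Q` of sets of tiles: its members are the tiles `f '' p` for
which there are isometries `F i` converging pointwise to `f` with `F i '' p` eventually in `Q i`. -/
def limitTiles [PseudoMetricSpace X] (l : Filter ι) (P : Set (Set X)) (Q : ι → Set (Set X)) :
    Set (Set X) :=
  {q | ∃ p ∈ P, ∃ (F : ι → X ≃ᵢ X) (f : X ≃ᵢ X), (∀ᶠ i in l, F i '' p ∈ Q i) ∧
    Tendsto (fun i ↦ ⇑(F i)) l (𝓝 f) ∧ q = f '' p}

section LimitTiles

variable {U : Ultrafilter ι} {P : Set (Set X)} {Q : ι → Set (Set X)}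

theorem exists_prototile_eventually_mem_image [PseudoMetricSpace X] (hfin : P.Finite)
    (hQ : ∀ᶠ i in U, IsIsometricPatch P (Q i)) {x : X} (hx : ∀ᶠ i in U, x ∈ ⋃₀ Q i) :
    ∃ p ∈ P, ∃ F : ι → X ≃ᵢ X, ∀ᶠ i in U, F i '' p ∈ Q i ∧ x ∈ F i '' p := by
  have hcopy : ∀ᶠ i in U, ∃ p ∈ P, ∃ f : X ≃ᵢ X, f '' p ∈ Q i ∧ x ∈ f '' p := by
    filter_upwards [hQ, hx] with i hQi ⟨q, hq, hxq⟩
    obtain ⟨p, hp, f, rfl⟩ := hQi.1 q hq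
    exact ⟨p, hp, f, hq, hxq⟩
  obtain ⟨p, hp, hpx⟩ := (Ultrafilter.eventually_exists_mem_iff hfin).1 hcopy
  exact ⟨p, hp, Eventually.choice hpx⟩

variable [MetricSpace X]

theorem isIsometricPatch_limitTiles (hcompact : ∀ p ∈ P, IsCompact p)
    (hQ : ∀ᶠ i in U, IsIsometricPatch P (Q i)) : IsIsometricPatch P (limitTiles U P Q) := by
  constructor
  · rintro q ⟨p, hp, -, f, -, -, rfl⟩
    exact ⟨p, hp, f, rfl⟩
  · rintro _ ⟨p, hp, F, f, hFQ, hF, rfl⟩ _ ⟨p', hp', G, g, hGQ, hG, rfl⟩ hne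
    refine disjoint_left.2 fun x hxf hxg ↦ hne ?_
    have heq : ∀ᶠ i in U, F i '' p = G i '' p' := by
      filter_upwards [hQ, hFQ, hGQ, eventually_mem_interior_image hF hxf,
        eventually_mem_interior_image hG hxg] with i hQi hFi hGi hxFi hxGi
      exact hQi.2.eq hFi hGi (not_disjoint_iff.2 ⟨x, hxFi, hxGi⟩)
    exact image_eq_image_of_eventually_eq (fun i ↦ (F i).isometry) (fun i ↦ (G i).isometry)
      hF hG (hcompact p hp) (hcompact p' hp') heq

theorem mem_sUnion_limitTiles [ProperSpace X] (hfin : P.Finite)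
    (hcompact : ∀ p ∈ P, IsCompact p) (hQ : ∀ᶠ i in U, IsIsometricPatch P (Q i)) {x : X}
    (hx : ∀ᶠ i in U, x ∈ ⋃₀ Q i) : x ∈ ⋃₀ limitTiles U P Q := by
  obtain ⟨p, hp, F, hF⟩ := exists_prototile_eventually_mem_image hfin hQ hx
  have hxF : ∀ᶠ i in U, x ∈ F i '' p := hF.mono fun _ h ↦ h.2
  obtain ⟨_, a, ha, -⟩ := hxF.exists
  have hbdd : ∀ᶠ i in U, dist (F i a) x ≤ diam p := by
    filter_upwards [hxF] with i ⟨b, hb, hbx⟩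
    rw [← hbx, (F i).dist_eq]
    exact dist_le_diam_of_mem (hcompact p hp).isBounded ha hb
  obtain ⟨f, hf⟩ := exists_tendsto_isometryEquiv hbdd
  refine ⟨f '' p, ⟨p, hp, F, f, hF.mono fun _ h ↦ h.1, hf, rfl⟩, ?_⟩
  exact (mem_image_iff_exists_tendsto (fun i ↦ (F i).isometry) hf (hcompact p hp)).2
    ⟨fun _ ↦ x, hxF, tendsto_const_nhds⟩

end LimitTiles

theorem protoset_admits_tiling_of_arbitrarily_large_patches_general [MetricSpace X] [ProperSpace X]
    {P : Set (Set X)} (hfin : P.Finite) (hcompact : ∀ p ∈ P, IsCompact p) (x₀ : X)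
    (hbig : ∀ R : ℝ, 0 < R → ∃ Q, IsIsometricPatch P Q ∧ closedBall x₀ R ⊆ ⋃₀ Q) :
    ∃ Q, IsIsometricPatch P Q ∧ ⋃₀ Q = univ := by
  choose! Q hpatch hcover using hbig
  let U : Ultrafilter ℝ := .of atTop
  have hU : (U : Filter ℝ) ≤ atTop := Ultrafilter.of_le atTop
  have hQ : ∀ᶠ R in U, IsIsometricPatch P (Q R) := hU ((eventually_gt_atTop 0).mono hpatch)
  have hx (x : X) : ∀ᶠ R in U, x ∈ ⋃₀ Q R := by
    filter_upwards [hU (eventually_gt_atTop 0), hU (eventually_ge_atTop (dist x x₀))] with R hR hxR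
    exact hcover R hR hxR
  exact ⟨limitTiles U P Q, isIsometricPatch_limitTiles hcompact hQ,
    eq_univ_of_forall fun x ↦ mem_sUnion_limitTiles hfin hcompact hQ (hx x)⟩

/-- Extension theorem: if a finite nonempty protoset of compact sets, each the closure of its
nonempty interior, admits patches covering arbitrarily large closed balls about the origin,
then it admits a tiling of the whole plane. -/
theorem protoset_admits_tiling_of_arbitrarily_large_patches
    (P : Set (Set (EuclideanSpace ℝ (Fin 2))))
    (hfin : P.Finite) (hne : P.Nonempty)
    (hcompact : ∀ p ∈ P, IsCompact p)
    (hclos : ∀ p ∈ P, p = closure (interior p))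
    (hint : ∀ p ∈ P, (interior p).Nonempty)
    (hbig : ∀ R : ℝ, 0 < R → ∃ Q, IsPatch P Q ∧ Metric.closedBall 0 R ⊆ ⋃₀ Q) :
    ∃ Q, IsPatch P Q ∧ ⋃₀ Q = Set.univ :=
  protoset_admits_tiling_of_arbitrarily_large_patches_general hfin hcompact 0 hbig
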